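/- Variational characterization of the eigenvalue: let A : X → ℝ be normalized continuous, V continuous, λ ∈ ℝ, F ∈ C(X,ℝ) with F > 0 and 𝓛_A F = (1 − V + λ)·F pointwise; set γ_V := 1 − V + λ and B_V := A + log F − log F∘σ − log γ_V∘σ, let μ_{B_V} be a Borel probability with ∫𝓛_{B_V} g dμ_{B_V} = ∫g dμ_{B_V} for all g ∈ C(X,ℝ), and let μ_{B_V,γ_V} be the probability with density (1/γ_V)/∫(1/γ_V)dμ_{B_V} with respect to μ_{B_V}. For a Borel probability ν on X define I(ν) := − inf{ ∫ ((𝓛_A u)(x) − u(x))/u(x) dν(x) : u ∈ C(X,ℝ), u(x) > 0 for all x }. Then: (i) I(ν) ≥ 0 for every ν; (ii) ∫ V dν − I(ν) ≤ λ for every Borel probability ν; (iii) ∫ V dμ_{B_V,γ_V} − I(μ_{B_V,γ_V}) = λ. Hence λ = sup over Borel probabilities ν of ( ∫V dν − I(ν) ), attained at μ_{B_V,γ_V}. -/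

import Mathlib

/-!
The infimum defining `I(ν)` is taken over a set bounded below by `-1`, because `𝓛_A u / u > 0`.
Testing with `u = 1` gives `I(ν) ≥ 0` (normalization of `A`), and testing with `u = F` gives
`-I(ν) ≤ ∫ (γ_V - 1) dν = λ - ∫ V dν`, which is (ii).

For (iii) the bound `∫ (𝓛_A u - u)/u dμ₂ ≥ λ - ∫ V dμ₂` is needed for every `u > 0`. Write
`u = F e^h`. Then `𝓛_A u / (γ_V u) = Σ_a e^{B_V(ax)} e^{h(ax) - h(x)}`, and `e^t ≥ 1 + t` together
with the normalization of `B_V` bounds this below by `1 + 𝓛_{B_V} h - h` (`ruelle_div_ge`).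
Integrating against the `𝓛_{B_V}`-invariant measure `μ_B` yields `∫ 𝓛_A u / (γ_V u) dμ_B ≥ 1`; dividing
by `∫ 1/γ_V dμ_B` turns this into `∫ 𝓛_A u / u dμ₂ ≥ 1 / ∫ 1/γ_V dμ_B = ∫ γ_V dμ₂`.
-/

open MeasureTheory Filter

noncomputable section

/-- The concatenation `a·x`: `(ax)(0) = a`, `(ax)(n+1) = x n`. -/
def cons {d : ℕ} (a : Fin d) (x : ℕ → Fin d) : ℕ → Fin d
  | 0 => a
  | n + 1 => x n

/-- The shift map `σ` on the Bernoulli space. -/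
def shift {d : ℕ} (x : ℕ → Fin d) : ℕ → Fin d := fun n => x (n + 1)

open Classical in
/-- The metric `d_θ` on the Bernoulli space: `d_θ(x,y) = θ^{min{n : x n ≠ y n}}` for `x ≠ y`. -/
def distTheta {d : ℕ} (θ : ℝ) (x y : ℕ → Fin d) : ℝ :=
  if x = y then 0 else θ ^ sInf {n : ℕ | x n ≠ y n}

/-- The Ruelle operator with potential `B`, applied pointwise:
`(𝓛_B g)(x) = Σ_{a} e^{B(ax)} g(ax)`. -/
def ruelleSum {d : ℕ} (B : (ℕ → Fin d) → ℝ) (g : (ℕ → Fin d) → ℝ) (x : ℕ → Fin d) : ℝ :=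
  ∑ a : Fin d, Real.exp (B (cons a x)) * g (cons a x)

/-- The exponential `e^B` of a bounded operator `B` on `C(X,ℝ)`, applied to `f`:
`e^B f = Σ_{n=0}^∞ (1/n!) Bⁿ f`. -/
def opExp {X : Type*} [TopologicalSpace X] [CompactSpace X]
    (B : C(X, ℝ) →L[ℝ] C(X, ℝ)) (f : C(X, ℝ)) : C(X, ℝ) :=
  ∑' n : ℕ, ((Nat.factorial n : ℝ)⁻¹ • (B ^ n) f)

/-- `γ_V = 1 - V + λ`. -/
def gammaV {d : ℕ} (V : (ℕ → Fin d) → ℝ) (lam : ℝ) (x : ℕ → Fin d) : ℝ := 1 - V x + lam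

/-- `B_V = A + log F - log F∘σ - log γ_V∘σ`. -/
def BV {d : ℕ} (A V : (ℕ → Fin d) → ℝ) (lam : ℝ) (F : (ℕ → Fin d) → ℝ)
    (y : ℕ → Fin d) : ℝ :=
  A y + Real.log (F y) - Real.log (F (shift y)) - Real.log (gammaV V lam (shift y))

/-- The rate function `I(ν) = - inf { ∫ (𝓛_A u - u)/u dν : u ∈ C(X,ℝ), u > 0 }`. -/
def Ifun {d : ℕ} (A : (ℕ → Fin d) → ℝ) (ν : Measure (ℕ → Fin d)) : ℝ :=
  - sInf {r : ℝ | ∃ u : C((ℕ → Fin d), ℝ), (∀ x, 0 < u x) ∧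
      r = ∫ x, (ruelleSum A u x - u x) / u x ∂ν}

lemma continuous_cons {d : ℕ} (a : Fin d) : Continuous (cons a : (ℕ → Fin d) → ℕ → Fin d) := by
  refine continuous_pi fun n => ?_
  cases n with
  | zero => exact continuous_const
  | succ n => exact continuous_apply n

lemma continuous_shift {d : ℕ} : Continuous (shift : (ℕ → Fin d) → ℕ → Fin d) :=
  continuous_pi fun n => continuous_apply (n + 1)

lemma shift_cons {d : ℕ} (a : Fin d) (x : ℕ → Fin d) : shift (cons a x) = x := rfl

lemma continuous_ruelleSum {d : ℕ} {B g : (ℕ → Fin d) → ℝ} (hB : Continuous B)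
    (hg : Continuous g) : Continuous (ruelleSum B g) := by
  refine continuous_finsetSum _ fun a _ => ?_
  exact (Real.continuous_exp.comp (hB.comp (continuous_cons a))).mul
    (hg.comp (continuous_cons a))

lemma integrable_of_continuous {d : ℕ} {g : (ℕ → Fin d) → ℝ} (hg : Continuous g)
    (ν : Measure (ℕ → Fin d)) [IsFiniteMeasure ν] : Integrable g ν :=
  hg.integrable_of_hasCompactSupport (HasCompactSupport.of_compactSpace g)

lemma ruelleSum_nonneg {d : ℕ} (B : (ℕ → Fin d) → ℝ) {g : (ℕ → Fin d) → ℝ} (hg : ∀ x, 0 < g x)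
    (x : ℕ → Fin d) : 0 ≤ ruelleSum B g x :=
  Finset.sum_nonneg fun _ _ => (mul_pos (Real.exp_pos _) (hg _)).le

lemma ruelleSum_pos {d : ℕ} (hd : 2 ≤ d) (B : (ℕ → Fin d) → ℝ) {g : (ℕ → Fin d) → ℝ}
    (hg : ∀ x, 0 < g x) (x : ℕ → Fin d) : 0 < ruelleSum B g x :=
  Finset.sum_pos (fun a _ => mul_pos (Real.exp_pos _) (hg _)) ⟨⟨0, by omega⟩, Finset.mem_univ _⟩

/-- The values over which the infimum in `Ifun` is taken are at least `-1`, so that the real-valued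
`sInf` is a genuine infimum. -/
lemma neg_one_le_integral {d : ℕ} {A : (ℕ → Fin d) → ℝ} (hA : Continuous A)
    (ν : Measure (ℕ → Fin d)) [IsProbabilityMeasure ν] (u : C((ℕ → Fin d), ℝ))
    (hu : ∀ x, 0 < u x) : -1 ≤ ∫ x, (ruelleSum A u x - u x) / u x ∂ν := by
  have hc : Continuous fun x => (ruelleSum A u x - u x) / u x :=
    ((continuous_ruelleSum hA u.continuous).sub u.continuous).div u.continuous
      fun x => (hu x).ne'
  have h : ∫ _, (-1 : ℝ) ∂ν ≤ ∫ x, (ruelleSum A u x - u x) / u x ∂ν := by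
    refine integral_mono (integrable_const _) (integrable_of_continuous hc ν) fun x => ?_
    simp only
    rw [le_div_iff₀ (hu x)]
    linarith [ruelleSum_nonneg A hu x]
  simpa using h

lemma neg_Ifun_le {d : ℕ} {A : (ℕ → Fin d) → ℝ} (hA : Continuous A)
    (ν : Measure (ℕ → Fin d)) [IsProbabilityMeasure ν] (u : C((ℕ → Fin d), ℝ))
    (hu : ∀ x, 0 < u x) : -Ifun A ν ≤ ∫ x, (ruelleSum A u x - u x) / u x ∂ν := by
  rw [Ifun, neg_neg]
  refine csInf_le ⟨-1, ?_⟩ ⟨u, hu, rfl⟩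
  rintro r ⟨v, hv, rfl⟩
  exact neg_one_le_integral hA ν v hv

lemma exp_BV_cons {d : ℕ} {A V F : (ℕ → Fin d) → ℝ} {lam : ℝ} (hF : ∀ x, 0 < F x)
    (hγ : ∀ x, 0 < gammaV V lam x) (a : Fin d) (x : ℕ → Fin d) :
    Real.exp (BV A V lam F (cons a x)) =
      Real.exp (A (cons a x)) * F (cons a x) / F x / gammaV V lam x := by
  rw [BV, shift_cons, Real.exp_sub, Real.exp_sub, Real.exp_add, Real.exp_log (hF _),
    Real.exp_log (hF _), Real.exp_log (hγ _)]

/-- The eigenfunction equation `𝓛_A F = γ_V F` makes `B_V` normalized. -/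
lemma BV_normalized {d : ℕ} {A V F : (ℕ → Fin d) → ℝ} {lam : ℝ} (hF : ∀ x, 0 < F x)
    (hγ : ∀ x, 0 < gammaV V lam x) (heig : ∀ x, ruelleSum A F x = gammaV V lam x * F x)
    (x : ℕ → Fin d) : ∑ a : Fin d, Real.exp (BV A V lam F (cons a x)) = 1 := by
  simp only [exp_BV_cons hF hγ, ← Finset.sum_div]
  have h := heig x
  rw [ruelleSum] at h
  rw [h, mul_div_assoc, div_self (hF x).ne', mul_one, div_self (hγ x).ne']

/-- With `h = log u - log F`, the ratio `𝓛_A u / (γ_V u)` is the average under the weights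
`e^{B_V(ax)}` of `e^{h(ax) - h(x)}`; the bound is then `e^t ≥ 1 + t`. -/
lemma ruelle_div_ge {d : ℕ} {A V F u : (ℕ → Fin d) → ℝ} {lam : ℝ} (hF : ∀ x, 0 < F x)
    (hu : ∀ x, 0 < u x) (hγ : ∀ x, 0 < gammaV V lam x)
    (heig : ∀ x, ruelleSum A F x = gammaV V lam x * F x) (x : ℕ → Fin d) :
    1 + (ruelleSum (BV A V lam F) (fun y => Real.log (u y) - Real.log (F y)) x
      - (Real.log (u x) - Real.log (F x))) ≤ ruelleSum A u x / u x / gammaV V lam x := by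
  set h : (ℕ → Fin d) → ℝ := fun y => Real.log (u y) - Real.log (F y) with hh
  have hexp : ∀ y, Real.exp (h y) = u y / F y := fun y => by
    rw [hh, Real.exp_sub, Real.exp_log (hu y), Real.exp_log (hF y)]
  have hL : 1 + (ruelleSum (BV A V lam F) h x - h x) =
      ∑ a : Fin d, Real.exp (BV A V lam F (cons a x)) * (h (cons a x) - h x + 1) := by
    simp only [mul_add, mul_sub, mul_one, Finset.sum_add_distrib, Finset.sum_sub_distrib,
      ← Finset.sum_mul, BV_normalized hF hγ heig x, ruelleSum]
    ring
  have hR : ruelleSum A u x / u x / gammaV V lam x =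
      ∑ a : Fin d, Real.exp (BV A V lam F (cons a x)) * Real.exp (h (cons a x) - h x) := by
    rw [ruelleSum, Finset.sum_div, Finset.sum_div]
    refine Finset.sum_congr rfl fun a _ => ?_
    rw [exp_BV_cons hF hγ, Real.exp_sub, hexp, hexp]
    have h1 := (hF x).ne'
    have h2 := (hF (cons a x)).ne'
    have h3 := (hu x).ne'
    have h4 := (hγ x).ne'
    field_simp
  change 1 + (ruelleSum (BV A V lam F) h x - h x) ≤ _
  rw [hL, hR]
  exact Finset.sum_le_sum fun a _ =>
    mul_le_mul_of_nonneg_left (Real.add_one_le_exp _) (Real.exp_pos _).le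

/-- **Variational characterization of the eigenvalue.** -/
theorem stmt_11 (d : ℕ) (hd : 2 ≤ d)
    (A V : (ℕ → Fin d) → ℝ) (hA : Continuous A) (hV : Continuous V)
    (hAnorm : ∀ x, ∑ a : Fin d, Real.exp (A (cons a x)) = 1)
    (lam : ℝ) (F : C((ℕ → Fin d), ℝ)) (hFpos : ∀ x, 0 < F x)
    (heig : ∀ x, ruelleSum A F x = (1 - V x + lam) * F x)
    (μB : Measure (ℕ → Fin d)) (hμBp : IsProbabilityMeasure μB)
    (hμBinv : ∀ g : C((ℕ → Fin d), ℝ), ∫ x, ruelleSum (BV A V lam F) g x ∂μB = ∫ x, g x ∂μB)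
    (μ2 : Measure (ℕ → Fin d)) (hμ2p : IsProbabilityMeasure μ2)
    (hμ2 : ∀ g : C((ℕ → Fin d), ℝ),
      ∫ x, g x ∂μ2 = (∫ x, g x / gammaV V lam x ∂μB) / ∫ x, (gammaV V lam x)⁻¹ ∂μB) :
    -- (i)
    (∀ ν : Measure (ℕ → Fin d), IsProbabilityMeasure ν → 0 ≤ Ifun A ν) ∧
    -- (ii)
    (∀ ν : Measure (ℕ → Fin d), IsProbabilityMeasure ν →
      (∫ x, V x ∂ν) - Ifun A ν ≤ lam) ∧
    -- (iii)
    (∫ x, V x ∂μ2) - Ifun A μ2 = lam := by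
  have hFc : Continuous F := F.continuous
  have hγc : Continuous (gammaV V lam) := (continuous_const.sub hV).add continuous_const
  have hγ : ∀ x, 0 < gammaV V lam x := fun x => by
    have h := ruelleSum_pos hd A hFpos x
    rw [heig x] at h
    exact pos_of_mul_pos_left h (hFpos x).le
  have hii : ∀ ν : Measure (ℕ → Fin d), IsProbabilityMeasure ν →
      (∫ x, V x ∂ν) - Ifun A ν ≤ lam := by
    intro ν hν
    have h := neg_Ifun_le hA ν F hFpos
    have h2 : ∫ x, (ruelleSum A F x - F x) / F x ∂ν = ∫ x, (lam - V x) ∂ν := by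
      refine integral_congr_ae (Eventually.of_forall fun x => ?_)
      have := (hFpos x).ne'
      simp only [heig x]
      field_simp
      ring
    rw [h2, integral_sub (integrable_const _) (integrable_of_continuous hV ν)] at h
    simp only [integral_const, probReal_univ, one_smul] at h
    linarith
  refine ⟨fun ν hν => ?_, hii, le_antisymm (hii μ2 hμ2p) ?_⟩
  · have h := neg_Ifun_le hA ν 1 fun x => by simp
    have h2 : ∀ x, ruelleSum A (1 : C((ℕ → Fin d), ℝ)) x = 1 := fun x => by
      simpa [ruelleSum] using hAnorm x
    simp only [h2] at h
    simp at h
    exact h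
  · set c := ∫ x, (gammaV V lam x)⁻¹ ∂μB with hc
    have hinvc : Continuous fun x => (gammaV V lam x)⁻¹ := hγc.inv₀ fun x => (hγ x).ne'
    have hcpos : 0 < c := by
      rw [hc, integral_pos_iff_support_of_nonneg (fun x => (inv_pos.2 (hγ x)).le)
        (integrable_of_continuous hinvc μB)]
      have : Function.support (fun x => (gammaV V lam x)⁻¹) = Set.univ :=
        Set.eq_univ_of_forall fun x => (inv_pos.2 (hγ x)).ne'
      simp [this]
    -- `∫ γ_V dμ₂ = 1 / c`
    have hγint : ∫ x, gammaV V lam x ∂μ2 = 1 / c := by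
      have h := hμ2 ⟨gammaV V lam, hγc⟩
      simpa [div_self (hγ _).ne'] using h
    have hVint : ∫ x, gammaV V lam x ∂μ2 = 1 + lam - ∫ x, V x ∂μ2 := by
      have h : ∀ x, gammaV V lam x = (1 + lam) - V x := fun x => by rw [gammaV]; ring
      simp only [h]
      rw [integral_sub (integrable_const _) (integrable_of_continuous hV μ2)]
      simp
    have hBc : Continuous (BV A V lam F) := by
      refine ((hA.add (hFc.log fun x => (hFpos x).ne')).sub ?_).sub ?_
      · exact (hFc.comp continuous_shift).log fun x => (hFpos _).ne'
      · exact (hγc.comp continuous_shift).log fun x => (hγ _).ne'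
    have hkey : lam - ∫ x, V x ∂μ2 ≤ -Ifun A μ2 := by
      rw [Ifun, neg_neg]
      refine le_csInf ⟨_, F, hFpos, rfl⟩ ?_
      rintro r ⟨u, hu, rfl⟩
      have huc : Continuous u := u.continuous
      have hqc : Continuous fun x => ruelleSum A u x / u x :=
        (continuous_ruelleSum hA huc).div huc fun x => (hu x).ne'
      have hhc : Continuous fun x => Real.log (u x) - Real.log (F x) :=
        (huc.log fun x => (hu x).ne').sub (hFc.log fun x => (hFpos x).ne')
      have hLhc := continuous_ruelleSum hBc hhc
      have h1 : 1 ≤ ∫ x, ruelleSum A u x / u x / gammaV V lam x ∂μB := by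
        have hm := integral_mono
          (integrable_of_continuous (continuous_const.add (hLhc.sub hhc)) μB)
          (integrable_of_continuous (hqc.div hγc fun x => (hγ x).ne') μB)
          (ruelle_div_ge hFpos hu hγ heig)
        have hinv := hμBinv ⟨_, hhc⟩
        simp only [ContinuousMap.coe_mk] at hinv
        rw [integral_add' (integrable_const _) (integrable_of_continuous (hLhc.sub hhc) μB),
          integral_sub' (integrable_of_continuous hLhc μB) (integrable_of_continuous hhc μB),
          hinv] at hm
        simpa using hm
      have h2 : 1 / c ≤ ∫ x, ruelleSum A u x / u x ∂μ2 := by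
        have h := hμ2 ⟨_, hqc⟩
        simp only [ContinuousMap.coe_mk] at h
        rw [h]
        exact div_le_div_of_nonneg_right h1 hcpos.le
      have h3 : ∫ x, (ruelleSum A u x - u x) / u x ∂μ2 = (∫ x, ruelleSum A u x / u x ∂μ2) - 1 := by
        have h : ∀ x, (ruelleSum A u x - u x) / u x = ruelleSum A u x / u x - 1 := fun x => by
          rw [sub_div, div_self (hu x).ne']
        simp only [h]
        rw [integral_sub (integrable_of_continuous hqc μ2) (integrable_const _)]
        simp
      rw [h3]
      linarith
    linarith
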